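/- Let a < b, let f, g : [a;b] → ℝ be regulated functions with no common points of discontinuity, and let ξ ∈ [a;b]. Let (η_k)_{k≥0} and (θ_k)_{k≥0} be nonincreasing sequences of non-negative reals with η_k → 0 and θ_k → 0. Set η_{-1} := sup_{a≤t≤b} |f(t) − f(a)|, θ_{-1} := sup_{a≤t≤b} |g(b) − g(t)|, S := Σ_{k=0}^{∞} 2^k · η_{k−1} · TV^{θ_k}(g,[a;b]) + Σ_{k=0}^{∞} 2^k · θ_k · TV^{η_k}(f,[a;b]), and S̃ := Σ_{k=0}^{∞} 2^k · θ_{k−1} · TV^{η_k}(f,[a;b]) + Σ_{k=0}^{∞} 2^k · η_k · TV^{θ_k}(g,[a;b]). If S < +∞ or S̃ < +∞, then the Riemann–Stieltjes integral ∫_a^b f dg exists and |∫_a^b f dg − f(ξ)·(g(b) − g(a))| ≤ 2·min{S, S̃}. -/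

import Mathlib

open Filter Set

/-- Truncated variation of `f` on `[a;b]` with truncation parameter `δ`. -/
noncomputable def truncVar (f : ℝ → ℝ) (δ a b : ℝ) : ENNReal :=
  ⨆ (n : ℕ) (t : Fin (n + 1) → ℝ) (_ : StrictMono t)
    (_ : ∀ i, t i ∈ Set.Icc a b),
    ∑ i : Fin n, ENNReal.ofReal (|f (t i.succ) - f (t i.castSucc)| - δ)

/-- p-variation of `f` on `[a;b]`. -/
noncomputable def pVar (f : ℝ → ℝ) (p a b : ℝ) : ENNReal :=
  ⨆ (n : ℕ) (t : Fin (n + 1) → ℝ) (_ : StrictMono t)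
    (_ : ∀ i, t i ∈ Set.Icc a b),
    ∑ i : Fin n, ENNReal.ofReal (|f (t i.succ) - f (t i.castSucc)| ^ p)

/-- The p-variation norm `(V^p(f,[a;b]))^{1/p}`. -/
noncomputable def pVarNorm (f : ℝ → ℝ) (p a b : ℝ) : ℝ :=
  (pVar f p a b).toReal ^ (1 / p)

/-- Oscillation norm `sup_{a ≤ s < t ≤ b} |f t - f s|`. -/
noncomputable def oscNorm (f : ℝ → ℝ) (a b : ℝ) : ℝ :=
  sSup {x | ∃ s ∈ Set.Icc a b, ∃ t ∈ Set.Icc a b, s < t ∧ x = |f t - f s|}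

/-- Sup norm `sup_{a ≤ t ≤ b} |f t|`. -/
noncomputable def supNorm (f : ℝ → ℝ) (a b : ℝ) : ℝ :=
  sSup {x | ∃ t ∈ Set.Icc a b, x = |f t|}

/-- `I` is the Riemann–Stieltjes integral `∫_a^b f dg`. -/
def RSIntegral (f g : ℝ → ℝ) (a b : ℝ) (I : ℝ) : Prop :=
  ∀ ε > (0 : ℝ), ∃ δ > (0 : ℝ), ∀ (n : ℕ) (t : Fin (n + 1) → ℝ) (ξ : Fin n → ℝ),
    StrictMono t → t 0 = a → t (Fin.last n) = b →
    (∀ i : Fin n, t i.castSucc ≤ ξ i ∧ ξ i ≤ t i.succ) →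
    (∀ i : Fin n, t i.succ - t i.castSucc < δ) →
    |∑ i : Fin n, f (ξ i) * (g (t i.succ) - g (t i.castSucc)) - I| < ε

/-- `f` is regulated on `[a;b]`: all the relevant one-sided limits exist and are finite. -/
def Regulated (f : ℝ → ℝ) (a b : ℝ) : Prop :=
  (∃ L : ℝ, Tendsto f (nhdsWithin a (Set.Ioi a)) (nhds L)) ∧
  (∃ L : ℝ, Tendsto f (nhdsWithin b (Set.Iio b)) (nhds L)) ∧
  ∀ x ∈ Set.Ioo a b,
    (∃ L : ℝ, Tendsto f (nhdsWithin x (Set.Iio x)) (nhds L)) ∧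
    (∃ L : ℝ, Tendsto f (nhdsWithin x (Set.Ioi x)) (nhds L))

/-- `f` and `g` have no common points of discontinuity on `[a;b]`. -/
def NoCommonDiscont (f g : ℝ → ℝ) (a b : ℝ) : Prop :=
  ∀ x ∈ Set.Icc a b,
    ContinuousWithinAt f (Set.Icc a b) x ∨ ContinuousWithinAt g (Set.Icc a b) x

/-!
Approximate `f` along a partition by lazy sequences (the play operator) with tolerances `η₀, η₁, …`,
started at the left end, and `g` by lazy sequences with tolerances `θ₀, θ₁, …`, started at the right
end; their variations are bounded by truncated variations. Refining the two approximations
alternately telescopes a Riemann–Stieltjes sum minus `f a * (g b - g a)` into terms that are each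
bounded by one term of `S`. Summation by parts exchanges the two functions and gives `S̃`.

Both `S` and `S̃` are superadditive in the interval. Covering `[a;b]` by intervals on which `f` and
`g` oscillate little, up to a jump, the local estimates can therefore be sewn together; at each seam
one of the two functions is continuous. Hence the Riemann–Stieltjes sums over `[a;b]` cluster at a
distance bounded by the sum over any scales with positive leading entry. The tails of a convergent
`S` provide such scales with arbitrarily small sum, and when a scale vanishes `f` or `g` has bounded
variation, so that a single scale suffices.
-/

/-- `TruncChain f δ a b s V`: some increasing chain of points of `[a;b]` ending at `s` has
truncated increments of `f` adding up to `V`. This is `truncVar` seen one point at a time. -/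
inductive TruncChain (f : ℝ → ℝ) (δ a b : ℝ) : ℝ → ENNReal → Prop
  | single {s : ℝ} (hs : s ∈ Icc a b) : TruncChain f δ a b s 0
  | snoc {s s' : ℝ} {V : ENNReal} (h : TruncChain f δ a b s V) (hs' : s' ∈ Icc a b)
      (hlt : s < s') : TruncChain f δ a b s' (V + ENNReal.ofReal (|f s' - f s| - δ))

namespace TruncChain

variable {f : ℝ → ℝ} {δ a b s : ℝ} {V : ENNReal}

lemma mem_Icc (h : TruncChain f δ a b s V) : s ∈ Icc a b := by
  cases h <;> assumption

lemma exists_strictMono (h : TruncChain f δ a b s V) :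
    ∃ (n : ℕ) (t : Fin (n + 1) → ℝ), StrictMono t ∧ (∀ i, t i ∈ Icc a b) ∧ t (Fin.last n) = s ∧
      ∑ i : Fin n, ENNReal.ofReal (|f (t i.succ) - f (t i.castSucc)| - δ) = V := by
  induction h with
  | @single s hs =>
    exact ⟨0, fun _ => s, Subsingleton.strictMono (α := Fin 1) _, fun _ => hs, rfl,
      Finset.sum_empty⟩
  | @snoc s s' V h hs' hlt ih =>
    obtain ⟨n, t, ht, hmem, rfl, rfl⟩ := ih
    refine ⟨n + 1, Fin.snoc t s', ?_, ?_, Fin.snoc_last _ _, ?_⟩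
    · rw [Fin.strictMono_iff_lt_succ, Fin.forall_fin_succ']
      constructor
      · intro i
        rw [Fin.succ_castSucc, Fin.snoc_castSucc (α := fun _ => ℝ),
          Fin.snoc_castSucc (α := fun _ => ℝ)]
        exact ht i.castSucc_lt_succ
      · simpa [Fin.succ_last] using hlt
    · rw [Fin.forall_fin_succ']
      simpa using ⟨hmem, hs'⟩
    · simp [Fin.sum_univ_castSucc, Fin.succ_castSucc, - Fin.castSucc_succ]

lemma of_strictMono {n : ℕ} {t : Fin (n + 1) → ℝ} (ht : StrictMono t)
    (hmem : ∀ i, t i ∈ Icc a b) :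
    TruncChain f δ a b (t (Fin.last n))
      (∑ i : Fin n, ENNReal.ofReal (|f (t i.succ) - f (t i.castSucc)| - δ)) := by
  induction n with
  | zero => simpa using single (hmem _)
  | succ n ih =>
    rw [Fin.sum_univ_castSucc]
    exact (ih (ht.comp Fin.strictMono_castSucc) fun i => hmem _).snoc (hmem _)
      (ht (Fin.castSucc_lt_last _))

lemma le_truncVar (h : TruncChain f δ a b s V) : V ≤ truncVar f δ a b := by
  obtain ⟨n, t, ht, hmem, -, rfl⟩ := h.exists_strictMono
  exact le_iSup₂_of_le n t (le_iSup₂_of_le ht hmem le_rfl)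

lemma mono {v w : ℝ} (hvw : v ≤ w) (h : TruncChain f δ a v s V) : TruncChain f δ a w s V := by
  induction h with
  | single hs => exact single ⟨hs.1, hs.2.trans hvw⟩
  | snoc _ hs' hlt ih => exact ih.snoc ⟨hs'.1, hs'.2.trans hvw⟩ hlt

lemma extend (hδ : 0 ≤ δ) (h : TruncChain f δ a b s V) {q : ℝ} (hq : q ∈ Icc a b) (hsq : s ≤ q) :
    TruncChain f δ a b q (V + ENNReal.ofReal (|f q - f s| - δ)) := by
  rcases hsq.eq_or_lt with rfl | hlt
  · simpa [ENNReal.ofReal_of_nonpos, hδ] using h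
  · exact h.snoc hq hlt

lemma exists_concat {u v w s' : ℝ} {V' : ENNReal} (h : TruncChain f δ u v s V)
    (h' : TruncChain f δ v w s' V') : ∃ V'' ≥ V + V', TruncChain f δ u w s' V'' := by
  have huv : u ≤ v := h.mem_Icc.1.trans h.mem_Icc.2
  have hvw : v ≤ w := h'.mem_Icc.1.trans h'.mem_Icc.2
  induction h' with
  | @single p hp =>
    rcases (h.mem_Icc.2.trans hp.1).eq_or_lt with rfl | hlt
    · exact ⟨V, by simp, h.mono hvw⟩
    · exact ⟨_, by simp, (h.mono hvw).snoc ⟨huv.trans hp.1, hp.2⟩ hlt⟩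
  | snoc _ hp hlt ih =>
    obtain ⟨W, hW, hc⟩ := ih
    refine ⟨_, ?_, hc.snoc ⟨huv.trans hp.1, hp.2⟩ hlt⟩
    rw [← add_assoc]
    gcongr

end TruncChain

lemma truncVar_eq_iSup_truncChain (f : ℝ → ℝ) (δ a b : ℝ) :
    truncVar f δ a b = ⨆ (V) (_ : ∃ s, TruncChain f δ a b s V), V := by
  refine le_antisymm ?_ (iSup₂_le fun V ⟨s, h⟩ => h.le_truncVar)
  exact iSup₂_le fun n t => iSup₂_le fun ht hmem =>
    le_iSup₂_of_le _ ⟨_, .of_strictMono ht hmem⟩ le_rfl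

lemma truncVar_add_le (f : ℝ → ℝ) (δ : ℝ) {u v w : ℝ} (huv : u ≤ v) (hvw : v ≤ w) :
    truncVar f δ u v + truncVar f δ v w ≤ truncVar f δ u w := by
  rw [truncVar_eq_iSup_truncChain f δ u v, truncVar_eq_iSup_truncChain f δ v w]
  refine ENNReal.biSup_add_biSup_le' ⟨0, u, .single (left_mem_Icc.2 huv)⟩
    ⟨0, v, .single (left_mem_Icc.2 hvw)⟩ fun V ⟨s, h⟩ V' ⟨s', h'⟩ => ?_
  obtain ⟨W, hW, hc⟩ := h.exists_concat h'
  exact hW.trans hc.le_truncVar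

lemma truncVar_anti (f : ℝ → ℝ) (a b : ℝ) : Antitone fun δ => truncVar f δ a b := by
  intro δ δ' h
  simp only [truncVar]
  gcongr

lemma truncVar_zero_of_eqOn_const {f : ℝ → ℝ} {a b c : ℝ} (h : ∀ x ∈ Icc a b, f x = c) :
    truncVar f 0 a b = 0 := by
  refine le_antisymm (iSup₂_le fun n t => iSup₂_le fun _ hmem => ?_) zero_le
  simp [h _ (hmem _)]

lemma truncVar_comp_neg_le (f : ℝ → ℝ) (δ a b : ℝ) :
    truncVar (fun x => f (-x)) δ (-b) (-a) ≤ truncVar f δ a b := by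
  refine iSup₂_le fun n t => iSup₂_le fun ht hmem => ?_
  refine le_iSup₂_of_le n (fun i => -t i.rev) (le_iSup₂_of_le ?_ ?_ ?_)
  · exact fun i j hij => neg_lt_neg (ht (Fin.rev_lt_rev.2 hij))
  · exact fun i => ⟨le_neg.1 (hmem _).2, neg_le.1 (hmem _).1⟩
  · rw [← Equiv.sum_comp Fin.revPerm]
    simp [Fin.rev_succ, Fin.rev_castSucc, abs_sub_comm]

/-- The play (backlash) operator with threshold `δ`: the lazy sequence that starts at `F 0` and
afterwards moves only as far as needed to stay within `δ` of `F`. It approximates `F` up to `δ` at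
the cost of no more variation than the truncated variation of `F`. -/
def play (δ : ℝ) (F : ℕ → ℝ) : ℕ → ℝ
  | 0 => F 0
  | i + 1 => max (F (i + 1) - δ) (min (F (i + 1) + δ) (play δ F i))

/-- The variation `∑_{i < n} |F (i + 1) - F i|` of a finite sequence. -/
noncomputable def seqVar (n : ℕ) (F : ℕ → ℝ) : ENNReal :=
  ∑ i ∈ Finset.range n, ‖F (i + 1) - F i‖ₑ

lemma seqVar_succ (n : ℕ) (F : ℕ → ℝ) : seqVar (n + 1) F = seqVar n F + ‖F (n + 1) - F n‖ₑ :=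
  Finset.sum_range_succ _ _

lemma seqVar_sub_le (n : ℕ) (F G : ℕ → ℝ) : seqVar n (F - G) ≤ seqVar n F + seqVar n G := by
  simp only [seqVar, ← Finset.sum_add_distrib]
  refine Finset.sum_le_sum fun i _ => ?_
  rw [Pi.sub_apply, Pi.sub_apply, sub_sub_sub_comm]
  exact enorm_sub_le

lemma abs_sub_play_le {δ : ℝ} (hδ : 0 ≤ δ) (F : ℕ → ℝ) (i : ℕ) : |F i - play δ F i| ≤ δ := by
  cases i with
  | zero => simpa [play] using hδ
  | succ i =>
    rw [abs_sub_le_iff, play]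
    constructor
    · linarith [le_max_left (F (i + 1) - δ) (min (F (i + 1) + δ) (play δ F i))]
    · rw [sub_le_iff_le_add, max_le_iff]
      exact ⟨by linarith, (min_le_left _ _).trans (by linarith)⟩

lemma enorm_add_ofReal_le_of_lt {δ F h : ℝ} (hδ : 0 ≤ δ) (hF : h < F - δ) (x : ℝ) :
    ‖F - δ - h‖ₑ + ENNReal.ofReal (|x - (F - δ)| - δ) ≤ ENNReal.ofReal (|x - h| - δ) ∨
      ‖F - δ - h‖ₑ + ENNReal.ofReal (|x - (F - δ)| - δ) ≤
        ENNReal.ofReal (|F - h| - δ) + ENNReal.ofReal (|x - F| - δ) := by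
  rw [Real.enorm_of_nonneg (by linarith)]
  rcases le_total F x with hx | hx
  · left
    rw [← ENNReal.ofReal_add (by linarith) (by rw [abs_of_nonneg] <;> linarith),
      abs_of_nonneg (by linarith), abs_of_nonneg (by linarith)]
    exact ENNReal.ofReal_le_ofReal (by linarith)
  · right
    gcongr 1
    · exact ENNReal.ofReal_le_ofReal (by linarith [le_abs_self (F - h)])
    · rcases le_total (F - δ) x with hx' | hx'
      · rw [ENNReal.ofReal_of_nonpos (by rw [abs_of_nonneg] <;> linarith)]
        exact zero_le
      · rw [abs_of_nonpos (by linarith), abs_of_nonpos (by linarith)]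
        exact ENNReal.ofReal_le_ofReal (by linarith)

lemma enorm_play_step_le {δ : ℝ} (hδ : 0 ≤ δ) (F : ℕ → ℝ) (n : ℕ) (x : ℝ) :
    ‖play δ F (n + 1) - play δ F n‖ₑ + ENNReal.ofReal (|x - play δ F (n + 1)| - δ) ≤
        ENNReal.ofReal (|x - play δ F n| - δ) ∨
      ‖play δ F (n + 1) - play δ F n‖ₑ + ENNReal.ofReal (|x - play δ F (n + 1)| - δ) ≤
        ENNReal.ofReal (|F (n + 1) - play δ F n| - δ) + ENNReal.ofReal (|x - F (n + 1)| - δ) := by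
  rw [play]
  rcases lt_or_ge (play δ F n) (F (n + 1) - δ) with hup | hup
  · rw [min_eq_right (by linarith), max_eq_left hup.le]
    exact enorm_add_ofReal_le_of_lt hδ hup x
  rcases lt_or_ge (F (n + 1) + δ) (play δ F n) with hdown | hdown
  · rw [min_eq_left hdown.le, max_eq_right (by linarith)]
    have key := enorm_add_ofReal_le_of_lt (F := -F (n + 1)) (h := -play δ F n) hδ (by linarith) (-x)
    rwa [← enorm_neg, ← abs_neg (-x - _), ← abs_neg (-x - _), ← abs_neg (-F (n + 1) - _),
      ← abs_neg (-x - _), show -(-F (n + 1) - δ - -play δ F n) = F (n + 1) + δ - play δ F n by ring,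
      show -(-x - (-F (n + 1) - δ)) = x - (F (n + 1) + δ) by ring, neg_sub_neg, neg_sub,
      neg_sub_neg, neg_sub, neg_sub_neg, neg_sub] at key
  · left
    simp [min_eq_right hdown, max_eq_right hup]

-- The probe `x` stands for the next value of `f`: it records in which direction the chain may
-- still be improved, and this is what makes the induction close.
lemma exists_truncChain_seqVar_play_le (f : ℝ → ℝ) {δ a b : ℝ} (hδ : 0 ≤ δ) {X : ℕ → ℝ}
    (hX : Monotone X) (hmem : ∀ i, X i ∈ Icc a b) (n : ℕ) (x : ℝ) :
    ∃ s ≤ X n, ∃ V, TruncChain f δ a b s V ∧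
      seqVar n (play δ (f ∘ X)) + ENNReal.ofReal (|x - play δ (f ∘ X) n| - δ) ≤
        V + ENNReal.ofReal (|x - f s| - δ) := by
  induction n generalizing x with
  | zero => exact ⟨X 0, le_rfl, 0, .single (hmem 0), by simp [seqVar, play]⟩
  | succ n ih =>
    have hle : X n ≤ X (n + 1) := hX n.le_succ
    rw [seqVar_succ, add_assoc]
    rcases enorm_play_step_le hδ (f ∘ X) n x with hstay | hmove
    · obtain ⟨s, hs, V, hc, hV⟩ := ih x
      exact ⟨s, hs.trans hle, V, hc, (by gcongr : _ ≤ _).trans hV⟩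
    · obtain ⟨s, hs, V, hc, hV⟩ := ih (f (X (n + 1)))
      refine ⟨X (n + 1), le_rfl, _, hc.extend hδ (hmem _) (hs.trans hle), ?_⟩
      calc _ ≤ _ := add_le_add_right hmove _
        _ ≤ _ := by
          rw [← add_assoc]
          exact add_le_add_left hV _

lemma seqVar_play_le_truncVar (f : ℝ → ℝ) {δ a b : ℝ} (hδ : 0 ≤ δ) {X : ℕ → ℝ}
    (hX : Monotone X) (hmem : ∀ i, X i ∈ Icc a b) (n : ℕ) :
    seqVar n (play δ (f ∘ X)) ≤ truncVar f δ a b := by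
  obtain ⟨s, hs, V, hc, hV⟩ := exists_truncChain_seqVar_play_le f hδ hX hmem n (f (X n))
  exact (le_self_add.trans hV).trans (hc.extend hδ (hmem n) hs).le_truncVar

lemma seqVar_reflect (n : ℕ) (F : ℕ → ℝ) : seqVar n (fun i => F (n - i)) = seqVar n F := by
  rw [seqVar, ← Finset.sum_range_reflect, seqVar]
  refine Finset.sum_congr rfl fun i hi => ?_
  have hi : i < n := Finset.mem_range.1 hi
  rw [enorm_sub_rev, show n - (n - 1 - i) = i + 1 by omega, show n - (n - 1 - i + 1) = i by omega]

lemma exists_seq_approx_start (f : ℝ → ℝ) {δ a b : ℝ} (hδ : 0 ≤ δ) {X : ℕ → ℝ}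
    (hX : Monotone X) (hmem : ∀ i, X i ∈ Icc a b) (n : ℕ) :
    ∃ H : ℕ → ℝ, H 0 = f (X 0) ∧ (∀ i ≤ n, |f (X i) - H i| ≤ δ) ∧
      seqVar n H ≤ truncVar f δ a b :=
  ⟨play δ (f ∘ X), rfl, fun i _ => abs_sub_play_le hδ (f ∘ X) i,
    seqVar_play_le_truncVar f hδ hX hmem n⟩

lemma exists_seq_approx_end (f : ℝ → ℝ) {δ a b : ℝ} (hδ : 0 ≤ δ) {X : ℕ → ℝ}
    (hX : Monotone X) (hmem : ∀ i, X i ∈ Icc a b) (n : ℕ) :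
    ∃ H : ℕ → ℝ, H n = f (X n) ∧ (∀ i ≤ n, |f (X i) - H i| ≤ δ) ∧
      seqVar n H ≤ truncVar f δ a b := by
  obtain ⟨H, hH₀, hH, hvar⟩ := exists_seq_approx_start (fun x => f (-x)) hδ
    (X := fun i => -X (n - i)) (fun i j hij => neg_le_neg (hX (by omega)))
    (fun i => ⟨neg_le_neg (hmem _).2, neg_le_neg (hmem _).1⟩) n
  refine ⟨fun i => H (n - i), by simpa using hH₀, fun i hi => ?_, ?_⟩
  · simpa [Nat.sub_sub_self hi] using hH (n - i) (n.sub_le i)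
  · rw [seqVar_reflect]
    exact hvar.trans (truncVar_comp_neg_le f δ a b)

/-- The right-tagged Stieltjes sum `∑_{i < n} F (i + 1) * (G (i + 1) - G i)` of two sequences. -/
def stieltjesSum (n : ℕ) (F G : ℕ → ℝ) : ℝ :=
  ∑ i ∈ Finset.range n, F (i + 1) * (G (i + 1) - G i)

lemma stieltjesSum_succ (n : ℕ) (F G : ℕ → ℝ) :
    stieltjesSum (n + 1) F G = stieltjesSum n F G + F (n + 1) * (G (n + 1) - G n) :=
  Finset.sum_range_succ _ _

lemma stieltjesSum_sub_left (n : ℕ) (F F' G : ℕ → ℝ) :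
    stieltjesSum n (F - F') G = stieltjesSum n F G - stieltjesSum n F' G := by
  simp only [stieltjesSum, Pi.sub_apply, sub_mul, Finset.sum_sub_distrib]

lemma stieltjesSum_sub_right (n : ℕ) (F G G' : ℕ → ℝ) :
    stieltjesSum n F (G - G') = stieltjesSum n F G - stieltjesSum n F G' := by
  simp only [stieltjesSum, Pi.sub_apply, ← Finset.sum_sub_distrib]
  exact Finset.sum_congr rfl fun i _ => by ring

lemma stieltjesSum_sub_const_sub_const (n : ℕ) (F G : ℕ → ℝ) (c d : ℝ) :
    stieltjesSum n (F - fun _ => c) (G - fun _ => d) = stieltjesSum n F G - c * (G n - G 0) := by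
  rw [← Finset.sum_range_sub, Finset.mul_sum]
  simp [stieltjesSum, sub_mul]

lemma enorm_stieltjesSum_le {n : ℕ} {F : ℕ → ℝ} {c : ℝ} (hF : ∀ i ≤ n, |F i| ≤ c) (G : ℕ → ℝ) :
    ‖stieltjesSum n F G‖ₑ ≤ ENNReal.ofReal c * seqVar n G := by
  rw [seqVar, Finset.mul_sum]
  refine (enorm_sum_le _ _).trans (Finset.sum_le_sum fun i hi => ?_)
  rw [enorm_mul, Real.enorm_eq_ofReal_abs]
  gcongr
  exact hF _ (Finset.mem_range.1 hi)

-- Summation by parts: reversing time exchanges the roles of integrand and integrator.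
lemma stieltjesSum_sub_eq_reflect (n : ℕ) (F G : ℕ → ℝ) :
    stieltjesSum n F G - F 0 * (G n - G 0) =
      stieltjesSum n (fun i => G (n - i)) (fun i => F (n - i)) - G n * (F 0 - F n) := by
  have hreflect : stieltjesSum n (fun i => G (n - i)) (fun i => F (n - i)) =
      ∑ i ∈ Finset.range n, G i * (F i - F (i + 1)) := by
    rw [stieltjesSum, ← Finset.sum_range_reflect]
    refine Finset.sum_congr rfl fun i hi => ?_
    have hi : i < n := Finset.mem_range.1 hi
    rw [show n - (n - 1 - i + 1) = i by omega, show n - (n - 1 - i) = i + 1 by omega]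
  have hparts : stieltjesSum n F G - ∑ i ∈ Finset.range n, G i * (F i - F (i + 1)) =
      F n * G n - F 0 * G 0 := by
    rw [stieltjesSum, ← Finset.sum_sub_distrib, ← Finset.sum_range_sub fun i => F i * G i]
    exact Finset.sum_congr rfl fun i _ => by ring
  rw [hreflect]
  linear_combination hparts

lemma enorm_stieltjesSum_le_of_anchored {n : ℕ} {F G : ℕ → ℝ} {c : ℝ} (hF : F 0 = 0)
    (hG : G n = 0) (hGc : ∀ i ≤ n, |G i| ≤ c) :
    ‖stieltjesSum n F G‖ₑ ≤ ENNReal.ofReal c * seqVar n F := by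
  have hparts := stieltjesSum_sub_eq_reflect n F G
  rw [hF, hG, zero_mul, zero_mul, sub_zero, sub_zero] at hparts
  rw [hparts, ← seqVar_reflect n F]
  exact enorm_stieltjesSum_le (fun i _ => hGc (n - i) (n.sub_le i)) _

/-- A tower of approximations `P k` of the sequence `F` on `{0, …, n}`, all exact at the index `j`
and starting from a constant. The tolerance of `P (k + 1)` is `α (k + 1)`; `α 0` is reserved for the
oscillation of `F` about `F j`. The increments of the tower have variation at most `2 ^ k * V k`. -/
structure IsApproxTower (n j : ℕ) (F α : ℕ → ℝ) (V : ℕ → ENNReal) (P : ℕ → ℕ → ℝ) : Prop where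
  base : ∀ i, P 0 i = F j
  anchor : ∀ k, P k j = F j
  abs_sub_le : ∀ k, ∀ i ≤ n, |F i - P (k + 1) i| ≤ α (k + 1)
  seqVar_le : ∀ k, seqVar n (P (k + 1) - P k) ≤ 2 ^ k * V k

lemma exists_isApproxTower {n j : ℕ} {F α : ℕ → ℝ} {V : ℕ → ENNReal} (hV : Monotone V)
    (happrox : ∀ k, ∃ H : ℕ → ℝ, H j = F j ∧ (∀ i ≤ n, |F i - H i| ≤ α (k + 1)) ∧
      seqVar n H ≤ V k) :
    ∃ P, IsApproxTower n j F α V P := by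
  choose H hanchor hclose hvar using happrox
  refine ⟨fun | 0 => fun _ => F j | k + 1 => H k, fun _ => rfl, ?_, hclose, ?_⟩
  · rintro (_ | k)
    exacts [rfl, hanchor k]
  · rintro (_ | k)
    · simpa [seqVar] using hvar 0
    · calc seqVar n (H (k + 1) - H k) ≤ seqVar n (H (k + 1)) + seqVar n (H k) := seqVar_sub_le _ _ _
        _ ≤ V (k + 1) + V (k + 1) := add_le_add (hvar _) ((hvar k).trans (hV k.le_succ))
        _ = 2 ^ 1 * V (k + 1) := by rw [pow_one, two_mul]
        _ ≤ 2 ^ (k + 1) * V (k + 1) := by gcongr <;> simp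

namespace IsApproxTower

variable {n j : ℕ} {F G α β : ℕ → ℝ} {V W : ℕ → ENNReal} {P Q : ℕ → ℕ → ℝ}

lemma reflect (hP : IsApproxTower n j F α V P) (hj : j ≤ n) :
    IsApproxTower n (n - j) (fun i => F (n - i)) α V (fun k i => P k (n - i)) where
  base i := by rw [hP.base, Nat.sub_sub_self hj]
  anchor k := by rw [Nat.sub_sub_self hj, hP.anchor]
  abs_sub_le k i _ := hP.abs_sub_le k _ (n.sub_le i)
  seqVar_le k := (seqVar_reflect n (P (k + 1) - P k)).trans_le (hP.seqVar_le k)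

lemma tendsto (hP : IsApproxTower n j F α V P) (hα : Tendsto α atTop (nhds 0)) {i : ℕ}
    (hi : i ≤ n) : Tendsto (fun k => F i - P k i) atTop (nhds 0) := by
  rw [← tendsto_add_atTop_iff_nat 1]
  exact squeeze_zero_norm (fun k => hP.abs_sub_le k i hi) ((tendsto_add_atTop_iff_nat 1).2 hα)

lemma tendsto_stieltjesSum (hP : IsApproxTower n 0 F α V P) (hQ : IsApproxTower n n G β W Q)
    (hα : Tendsto α atTop (nhds 0)) (hβ : Tendsto β atTop (nhds 0)) :
    Tendsto (fun k => stieltjesSum n (F - P k) (G - Q k)) atTop (nhds 0) := by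
  rw [show (0 : ℝ) = ∑ i ∈ Finset.range n, 0 * (0 - 0) by simp]
  refine tendsto_finsetSum _ fun i hi => ?_
  have hi : i + 1 ≤ n := Finset.mem_range.1 hi
  exact (hP.tendsto hα hi).mul ((hQ.tendsto hβ hi).sub (hQ.tendsto hβ (by omega)))

-- One step of the telescoping refines first the integrator, then the integrand:
-- `(F - P k, G - Q k) ⟶ (F - P k, G - Q (k + 1)) ⟶ (F - P (k + 1), G - Q (k + 1))`.
lemma edist_stieltjesSum_succ_le (hP : IsApproxTower n 0 F α V P) (hQ : IsApproxTower n n G β W Q)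
    (hF : ∀ i ≤ n, |F i - F 0| ≤ α 0) (k : ℕ) :
    edist (stieltjesSum n (F - P k) (G - Q k)) (stieltjesSum n (F - P (k + 1)) (G - Q (k + 1))) ≤
      ENNReal.ofReal (2 ^ k * α k) * W k + ENNReal.ofReal (2 ^ k * β (k + 1)) * V k := by
  have hsplit : stieltjesSum n (F - P k) (G - Q k) -
      stieltjesSum n (F - P (k + 1)) (G - Q (k + 1)) =
        stieltjesSum n (F - P k) (Q (k + 1) - Q k) +
          stieltjesSum n (P (k + 1) - P k) (G - Q (k + 1)) := by
    simp only [stieltjesSum_sub_left, stieltjesSum_sub_right]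
    ring
  have hFP : ∀ i ≤ n, |(F - P k) i| ≤ α k := by
    cases k with
    | zero => simpa [hP.base] using hF
    | succ k => exact hP.abs_sub_le k
  have hscale (c : ℝ) (U : ENNReal) :
      ENNReal.ofReal c * (2 ^ k * U) = ENNReal.ofReal (2 ^ k * c) * U := by
    rw [ENNReal.ofReal_mul (by positivity), ENNReal.ofReal_pow zero_le_two, ENNReal.ofReal_ofNat]
    ring
  rw [edist_eq_enorm_sub, hsplit, ← hscale, ← hscale]
  refine (enorm_add_le _ _).trans (add_le_add ?_ ?_)
  · exact (enorm_stieltjesSum_le hFP _).trans (by gcongr; exact hQ.seqVar_le k)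
  · refine (enorm_stieltjesSum_le_of_anchored ?_ ?_ (hQ.abs_sub_le k)).trans
      (by gcongr; exact hP.seqVar_le k)
    · simp [hP.anchor]
    · simp [hQ.anchor]

lemma enorm_stieltjesSum_sub_le_of_left (hP : IsApproxTower n 0 F α V P)
    (hQ : IsApproxTower n n G β W Q) (hα : Tendsto α atTop (nhds 0))
    (hβ : Tendsto β atTop (nhds 0)) (hF : ∀ i ≤ n, |F i - F 0| ≤ α 0) :
    ‖stieltjesSum n F G - F 0 * (G n - G 0)‖ₑ ≤
      ∑' k, ENNReal.ofReal (2 ^ k * α k) * W k +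
        ∑' k, ENNReal.ofReal (2 ^ k * β (k + 1)) * V k := by
  have hP₀ : P 0 = fun _ => F 0 := funext hP.base
  have hQ₀ : Q 0 = fun _ => G n := funext hQ.base
  rw [← stieltjesSum_sub_const_sub_const n F G (F 0) (G n), ← hP₀, ← hQ₀, ← edist_zero_right,
    ← ENNReal.tsum_add]
  exact edist_le_tsum_of_edist_le_of_tendsto₀ _ (hP.edist_stieltjesSum_succ_le hQ hF)
    (hP.tendsto_stieltjesSum hQ hα hβ)

lemma enorm_stieltjesSum_sub_le_of_right (hP : IsApproxTower n 0 F α V P)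
    (hQ : IsApproxTower n n G β W Q) (hα : Tendsto α atTop (nhds 0))
    (hβ : Tendsto β atTop (nhds 0)) (hG : ∀ i ≤ n, |G i - G n| ≤ β 0) :
    ‖stieltjesSum n F G - F 0 * (G n - G 0)‖ₑ ≤
      ∑' k, ENNReal.ofReal (2 ^ k * β k) * V k +
        ∑' k, ENNReal.ofReal (2 ^ k * α (k + 1)) * W k := by
  have hP' := hP.reflect (Nat.zero_le n)
  have hQ' := hQ.reflect le_rfl
  rw [Nat.sub_zero] at hP'
  rw [Nat.sub_self] at hQ'
  simpa [stieltjesSum_sub_eq_reflect n F G] using hQ'.enorm_stieltjesSum_sub_le_of_left hP' hβ hα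
    fun i _ => by simpa using hG (n - i) (n.sub_le i)

end IsApproxTower

/-- An admissible sequence of scales. Relative to the indexing `η₋₁, η₀, η₁, …` of the literature
it is shifted by one: `α 0 = η₋₁` bounds an oscillation and need not dominate `α 1 = η₀`. -/
structure IsScale (α : ℕ → ℝ) : Prop where
  nonneg : ∀ k, 0 ≤ α k
  antitone_succ : Antitone fun k => α (k + 1)
  tendsto_zero : Tendsto α atTop (nhds 0)

/-- The multiscale sum `S` on `[a;b]`. Exchanging the two functions and the two scales
gives `S̃`. -/
noncomputable def scaleSum (f g : ℝ → ℝ) (α β : ℕ → ℝ) (a b : ℝ) : ENNReal :=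
  ∑' k, ENNReal.ofReal (2 ^ k * α k) * truncVar g (β (k + 1)) a b +
    ∑' k, ENNReal.ofReal (2 ^ k * β (k + 1)) * truncVar f (α (k + 1)) a b

lemma scaleSum_add_le (f g : ℝ → ℝ) (α β : ℕ → ℝ) {u v w : ℝ} (huv : u ≤ v) (hvw : v ≤ w) :
    scaleSum f g α β u v + scaleSum f g α β v w ≤ scaleSum f g α β u w := by
  rw [scaleSum, scaleSum, add_add_add_comm, ← ENNReal.tsum_add, ← ENNReal.tsum_add]
  simp only [← mul_add]
  unfold scaleSum
  gcongr <;> exact truncVar_add_le _ _ huv hvw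

namespace IsScale

variable {α : ℕ → ℝ}

lemma exists_isApproxTower_start (hα : IsScale α) (f : ℝ → ℝ) {a b : ℝ} {X : ℕ → ℝ}
    (hX : Monotone X) (hmem : ∀ i, X i ∈ Icc a b) (n : ℕ) :
    ∃ P, IsApproxTower n 0 (f ∘ X) α (fun k => truncVar f (α (k + 1)) a b) P :=
  exists_isApproxTower ((truncVar_anti f a b).comp hα.antitone_succ)
    fun _ => exists_seq_approx_start f (hα.nonneg _) hX hmem n

lemma exists_isApproxTower_end (hα : IsScale α) (f : ℝ → ℝ) {a b : ℝ} {X : ℕ → ℝ}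
    (hX : Monotone X) (hmem : ∀ i, X i ∈ Icc a b) (n : ℕ) :
    ∃ P, IsApproxTower n n (f ∘ X) α (fun k => truncVar f (α (k + 1)) a b) P :=
  exists_isApproxTower ((truncVar_anti f a b).comp hα.antitone_succ)
    fun _ => exists_seq_approx_end f (hα.nonneg _) hX hmem n

end IsScale

/-- `IsRiemannSum f g δ u w R`: `R` is a Riemann–Stieltjes sum of `∫ f dg` for a tagged partition
of `[u;w]` of mesh less than `δ`, built one cell at a time. -/
inductive IsRiemannSum (f g : ℝ → ℝ) (δ u : ℝ) : ℝ → ℝ → Prop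
  | nil : IsRiemannSum f g δ u u 0
  | snoc {w w' R : ℝ} (ξ : ℝ) (h : IsRiemannSum f g δ u w R) (hlt : w < w') (hξ : ξ ∈ Icc w w')
      (hδ : w' - w < δ) : IsRiemannSum f g δ u w' (R + f ξ * (g w' - g w))

namespace IsRiemannSum

variable {f g : ℝ → ℝ} {δ u w R : ℝ}

lemma le (h : IsRiemannSum f g δ u w R) : u ≤ w := by
  induction h with
  | nil => exact le_rfl
  | snoc _ _ hlt _ _ ih => exact ih.trans hlt.le

lemma eq_zero (h : IsRiemannSum f g δ u u R) : R = 0 := by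
  cases h with
  | nil => rfl
  | snoc _ h hlt => exact absurd h.le hlt.not_ge

lemma mono {δ' : ℝ} (hδ' : δ ≤ δ') (h : IsRiemannSum f g δ u w R) :
    IsRiemannSum f g δ' u w R := by
  induction h with
  | nil => exact nil
  | snoc ξ _ hlt hξ hδ ih => exact ih.snoc ξ hlt hξ (hδ.trans_le hδ')

lemma of_strictMono {n : ℕ} {t : Fin (n + 1) → ℝ} {ξ : Fin n → ℝ} (ht : StrictMono t)
    (hξ : ∀ i : Fin n, t i.castSucc ≤ ξ i ∧ ξ i ≤ t i.succ)
    (hδ : ∀ i : Fin n, t i.succ - t i.castSucc < δ) :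
    IsRiemannSum f g δ (t 0) (t (Fin.last n))
      (∑ i : Fin n, f (ξ i) * (g (t i.succ) - g (t i.castSucc))) := by
  induction n with
  | zero => simpa using nil
  | succ n ih =>
    rw [Fin.sum_univ_castSucc]
    exact (ih (ht.comp Fin.strictMono_castSucc) (fun i => hξ i.castSucc)
      fun i => hδ i.castSucc).snoc (ξ (Fin.last n)) (ht (Fin.castSucc_lt_last _))
      (hξ (Fin.last n)) (hδ (Fin.last n))

lemma exists_of_sub_le (f g : ℝ → ℝ) {r : ℝ} (hr : 0 ≤ r) (hrδ : r < δ) (n : ℕ) (huw : u ≤ w)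
    (hn : w - u ≤ n * r) : ∃ R, IsRiemannSum f g δ u w R := by
  induction n generalizing w with
  | zero =>
    obtain rfl : u = w := le_antisymm huw (by simpa using hn)
    exact ⟨0, nil⟩
  | succ n ih =>
    rcases huw.eq_or_lt with rfl | hlt
    · exact ⟨0, nil⟩
    push_cast at hn
    obtain ⟨R, hR⟩ := ih (le_max_left u (w - r)) (by
      rw [sub_le_iff_le_add, max_le_iff]
      exact ⟨by nlinarith [n.cast_nonneg (α := ℝ)], by linarith⟩)
    rcases (max_le hlt.le (by linarith : w - r ≤ w)).eq_or_lt with heq | hlt'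
    · exact ⟨R, heq ▸ hR⟩
    · exact ⟨_, hR.snoc w hlt' ⟨hlt'.le, le_rfl⟩ (by linarith [le_max_right u (w - r)])⟩

lemma exists_of_pos (f g : ℝ → ℝ) (hδ : 0 < δ) (huw : u ≤ w) :
    ∃ R, IsRiemannSum f g δ u w R := by
  obtain ⟨n, hn⟩ := exists_nat_ge ((w - u) / (δ / 2))
  exact exists_of_sub_le f g (half_pos hδ).le (half_lt_self hδ) n huw
    ((div_le_iff₀ (half_pos hδ)).1 hn)

lemma exists_stieltjesSum (h : IsRiemannSum f g δ u w R) :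
    ∃ (n : ℕ) (t X : ℕ → ℝ), Monotone t ∧ Monotone X ∧ (∀ i, t i ∈ Icc u w) ∧
      (∀ i, X i ∈ Icc u w) ∧ t 0 = u ∧ X 0 = u ∧ X n = w ∧ R = stieltjesSum n (f ∘ t) (g ∘ X) := by
  induction h with
  | nil =>
    exact ⟨0, fun _ => u, fun _ => u, monotone_const, monotone_const, by simp, by simp, rfl, rfl,
      rfl, by simp [stieltjesSum]⟩
  | @snoc w w' R ξ h hlt hξ _ ih =>
    obtain ⟨n, t, X, ht, hX, htmem, hXmem, ht₀, hX₀, hXn, rfl⟩ := ih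
    have hmono {Y : ℕ → ℝ} {c : ℝ} (hY : Monotone Y) (hYmem : ∀ i, Y i ∈ Icc u w) (hc : w ≤ c) :
        Monotone fun i => if i ≤ n then Y i else c := by
      intro i j hij
      dsimp only
      split_ifs with hi hj hj
      exacts [hY hij, (hYmem i).2.trans hc, absurd (hij.trans hj) hi, le_rfl]
    have hmem {Y : ℕ → ℝ} {c : ℝ} (hYmem : ∀ i, Y i ∈ Icc u w) (hc : c ∈ Icc w w') (i : ℕ) :
        (if i ≤ n then Y i else c) ∈ Icc u w' := by
      split_ifs
      exacts [⟨(hYmem i).1, (hYmem i).2.trans hlt.le⟩, ⟨h.le.trans hc.1, hc.2⟩]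
    refine ⟨n + 1, _, _, hmono ht htmem hξ.1, hmono hX hXmem hlt.le, hmem htmem hξ,
      hmem hXmem (right_mem_Icc.2 hlt.le), by simpa using ht₀, by simpa using hX₀, by simp, ?_⟩
    rw [stieltjesSum_succ]
    congr 1
    · refine Finset.sum_congr rfl fun i hi => ?_
      have hi : i < n := Finset.mem_range.1 hi
      simp [hi.le, Nat.succ_le_of_lt hi]
    · simp [hXn]

lemma enorm_sub_le_of_left {α β : ℕ → ℝ} (hα : IsScale α) (hβ : IsScale β)
    (h : IsRiemannSum f g δ u w R) (hf : ∀ x ∈ Icc u w, |f x - f u| ≤ α 0) :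
    ‖R - f u * (g w - g u)‖ₑ ≤ scaleSum f g α β u w := by
  obtain ⟨n, t, X, ht, hX, htmem, hXmem, ht₀, hX₀, hXn, rfl⟩ := h.exists_stieltjesSum
  obtain ⟨P, hP⟩ := hα.exists_isApproxTower_start f ht htmem n
  obtain ⟨Q, hQ⟩ := hβ.exists_isApproxTower_end g hX hXmem n
  simpa [scaleSum, ht₀, hX₀, hXn] using hP.enorm_stieltjesSum_sub_le_of_left hQ hα.tendsto_zero
    hβ.tendsto_zero fun i _ => by simpa [ht₀] using hf _ (htmem i)

lemma enorm_sub_le_of_right {α β : ℕ → ℝ} (hα : IsScale α) (hβ : IsScale β)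
    (h : IsRiemannSum f g δ u w R) (hg : ∀ x ∈ Icc u w, |g x - g w| ≤ β 0) :
    ‖R - f u * (g w - g u)‖ₑ ≤ scaleSum g f β α u w := by
  obtain ⟨n, t, X, ht, hX, htmem, hXmem, ht₀, hX₀, hXn, rfl⟩ := h.exists_stieltjesSum
  obtain ⟨P, hP⟩ := hα.exists_isApproxTower_start f ht htmem n
  obtain ⟨Q, hQ⟩ := hβ.exists_isApproxTower_end g hX hXmem n
  simpa [scaleSum, ht₀, hX₀, hXn] using hP.enorm_stieltjesSum_sub_le_of_right hQ hα.tendsto_zero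
    hβ.tendsto_zero fun i _ => by simpa [hXn] using hg _ (hXmem i)

lemma exists_head (h : IsRiemannSum f g δ u w R) (huw : u < w) :
    ∃ q ξ R', u < q ∧ q ≤ w ∧ ξ ∈ Icc u q ∧ q - u < δ ∧ IsRiemannSum f g δ q w R' ∧
      R = f ξ * (g q - g u) + R' := by
  induction h with
  | nil => exact absurd huw (lt_irrefl _)
  | @snoc w w' R ξ h hlt hξ hδ ih =>
    rcases h.le.eq_or_lt with rfl | huw'
    · exact ⟨w', ξ, 0, huw, le_rfl, hξ, hδ, nil, by rw [h.eq_zero, zero_add, add_zero]⟩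
    · obtain ⟨q, ξ', R', huq, hqw, hξ', hqδ, hR', rfl⟩ := ih huw'
      exact ⟨q, ξ', _, huq, hqw.trans hlt.le, hξ', hqδ, hR'.snoc ξ hlt hξ hδ, add_assoc _ _ _⟩

lemma exists_last (h : IsRiemannSum f g δ u w R) (huw : u < w) :
    ∃ p ξ R', u ≤ p ∧ p < w ∧ ξ ∈ Icc p w ∧ w - p < δ ∧ IsRiemannSum f g δ u p R' ∧
      R = R' + f ξ * (g w - g p) := by
  cases h with
  | nil => exact absurd huw (lt_irrefl _)
  | @snoc p _ R' ξ h hlt hξ hδ => exact ⟨p, ξ, R', h.le, hlt, hξ, hδ, h, rfl⟩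

end IsRiemannSum

/-- Changing to `x` the tag of a cell of `[a;b]` that contains `x` and is shorter than `δ` alters a
Riemann–Stieltjes sum by at most `e`. -/
def RetagLE (f g : ℝ → ℝ) (a b δ x e : ℝ) : Prop :=
  ∀ p ∈ Icc a x, ∀ q ∈ Icc x b, ∀ ξ ∈ Icc p q, q - p < δ → |(f ξ - f x) * (g q - g p)| ≤ e

lemma RetagLE.mono {f g : ℝ → ℝ} {a b δ x e u v δ' : ℝ} (h : RetagLE f g a b δ x e) (hu : a ≤ u)
    (hv : v ≤ b) (hδ : δ' ≤ δ) : RetagLE f g u v δ' x e :=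
  fun p hp q hq ξ hξ hpq =>
    h p ⟨hu.trans hp.1, hp.2⟩ q ⟨hq.1, hq.2.trans hv⟩ ξ hξ (hpq.trans_le hδ)

lemma RetagLE.mono_right {f g : ℝ → ℝ} {a b δ x e e' : ℝ} (h : RetagLE f g a b δ x e)
    (he : e ≤ e') : RetagLE f g a b δ x e' :=
  fun p hp q hq ξ hξ hpq => (h p hp q hq ξ hξ hpq).trans he

lemma IsRiemannSum.exists_split {f g : ℝ → ℝ} {δ u v w R e : ℝ} (h : IsRiemannSum f g δ u w R)
    (huv : u ≤ v) (hvw : v ≤ w) (he : 0 ≤ e) (hretag : RetagLE f g u w δ v e) :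
    ∃ R₁ R₂, IsRiemannSum f g δ u v R₁ ∧ IsRiemannSum f g δ v w R₂ ∧ |R - (R₁ + R₂)| ≤ e := by
  induction h with
  | nil =>
    obtain rfl : u = v := le_antisymm huv hvw
    exact ⟨0, 0, nil, nil, by simpa using he⟩
  | @snoc w w' R ξ h hlt hξ hδ ih =>
    rcases le_or_gt v w with hvw' | hwv
    · obtain ⟨R₁, R₂, h₁, h₂, hR⟩ := ih hvw' (hretag.mono le_rfl hlt.le le_rfl)
      refine ⟨R₁, _, h₁, h₂.snoc ξ hlt hξ hδ, ?_⟩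
      rwa [← add_assoc, add_sub_add_right_eq_sub]
    have h₁ := h.snoc v hwv ⟨hwv.le, le_rfl⟩ (by linarith)
    have hcell := hretag w ⟨h.le, hwv.le⟩ w' ⟨hvw, le_rfl⟩ ξ hξ hδ
    rcases hvw.eq_or_lt with rfl | hvw'
    · refine ⟨_, 0, h₁, nil, ?_⟩
      convert hcell using 2
      ring
    · refine ⟨_, _, h₁, nil.snoc v hvw' ⟨le_rfl, hvw⟩ (by linarith), ?_⟩
      convert hcell using 2
      ring

/-- The filter of Riemann–Stieltjes sums of `∫ f dg` over `[u;v]` as the mesh tends to `0`. -/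
def riemannSums (f g : ℝ → ℝ) (u v : ℝ) : Filter ℝ :=
  ⨅ δ ∈ Ioi (0 : ℝ), 𝓟 {R | IsRiemannSum f g δ u v R}

lemma hasBasis_riemannSums (f g : ℝ → ℝ) (u v : ℝ) :
    (riemannSums f g u v).HasBasis (fun δ : ℝ => 0 < δ) fun δ => {R | IsRiemannSum f g δ u v R} :=
  hasBasis_biInf_principal'
    (fun δ hδ δ' hδ' => ⟨min δ δ', mem_Ioi.2 (lt_min hδ hδ'), fun _ hR => hR.mono (min_le_left _ _),
      fun _ hR => hR.mono (min_le_right _ _)⟩)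
    ⟨1, mem_Ioi.2 one_pos⟩

lemma eventually_riemannSums {f g : ℝ → ℝ} {u v : ℝ} {p : ℝ → Prop} :
    (∀ᶠ R in riemannSums f g u v, p R) ↔ ∃ δ > 0, ∀ R, IsRiemannSum f g δ u v R → p R :=
  (hasBasis_riemannSums f g u v).eventually_iff

lemma riemannSums_neBot (f g : ℝ → ℝ) {u v : ℝ} (huv : u ≤ v) : (riemannSums f g u v).NeBot :=
  (hasBasis_riemannSums f g u v).neBot_iff.2 fun hδ => IsRiemannSum.exists_of_pos f g hδ huv

lemma rsIntegral_of_riemannSums_le_nhds {f g : ℝ → ℝ} {a b I : ℝ}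
    (h : riemannSums f g a b ≤ nhds I) : RSIntegral f g a b I := by
  intro ε hε
  obtain ⟨δ, hδ, hI⟩ := eventually_riemannSums.1 (h (Metric.ball_mem_nhds I hε))
  refine ⟨δ, hδ, fun n t ξ ht ht₀ htn hξ hmesh => hI _ ?_⟩
  rw [← ht₀, ← htn]
  exact .of_strictMono ht hξ hmesh

/-- The oscillation of `h` on `s` is at most `e`. -/
def OscLE (h : ℝ → ℝ) (s : Set ℝ) (e : ℝ) : Prop :=
  ∀ x ∈ s, ∀ y ∈ s, |h x - h y| ≤ e

lemma OscLE.mono {h : ℝ → ℝ} {s t : Set ℝ} {e : ℝ} (hs : OscLE h s e) (hts : t ⊆ s) :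
    OscLE h t e :=
  fun x hx y hy => hs x (hts hx) y (hts hy)

lemma exists_oscLE_ball_inter {h : ℝ → ℝ} {x L e : ℝ} {s : Set ℝ}
    (hL : Tendsto h (nhdsWithin x s) (nhds L)) (he : 0 < e) :
    ∃ d > 0, OscLE h (Metric.ball x d ∩ s) e := by
  obtain ⟨d, hd, hdist⟩ := Metric.tendsto_nhdsWithin_nhds.1 hL (e / 2) (half_pos he)
  refine ⟨d, hd, fun y hy z hz => ?_⟩
  rw [← Real.dist_eq]
  linarith [dist_triangle_right (h y) (h z) L, hdist hy.2 hy.1, hdist hz.2 hz.1]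

lemma exists_oscLE_ball_inter₂ {f g : ℝ → ℝ} {x L M e : ℝ} {s : Set ℝ}
    (hL : Tendsto f (nhdsWithin x s) (nhds L)) (hM : Tendsto g (nhdsWithin x s) (nhds M))
    (he : 0 < e) :
    ∃ d > 0, OscLE f (Metric.ball x d ∩ s) e ∧ OscLE g (Metric.ball x d ∩ s) e := by
  obtain ⟨d, hd, hfd⟩ := exists_oscLE_ball_inter hL he
  obtain ⟨d', hd', hgd⟩ := exists_oscLE_ball_inter hM he
  exact ⟨min d d', lt_min hd hd',
    hfd.mono (inter_subset_inter_left s (Metric.ball_subset_ball (min_le_left _ _))),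
    hgd.mono (inter_subset_inter_left s (Metric.ball_subset_ball (min_le_right _ _)))⟩

namespace Regulated

variable {f g : ℝ → ℝ} {a b x e : ℝ}

lemma exists_tendsto_left (hf : Regulated f a b) (hx : x ∈ Icc a b) :
    ∃ L, Tendsto f (nhdsWithin x (Ico a x)) (nhds L) := by
  rcases hx.1.eq_or_lt with rfl | hax
  · exact ⟨0, by simp⟩
  have hlim : ∃ L, Tendsto f (nhdsWithin x (Iio x)) (nhds L) := by
    rcases hx.2.eq_or_lt with rfl | hxb
    exacts [hf.2.1, (hf.2.2 x ⟨hax, hxb⟩).1]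
  exact hlim.imp fun L hL => hL.mono_left (nhdsWithin_mono x fun _ hy => hy.2)

lemma exists_tendsto_right (hf : Regulated f a b) (hx : x ∈ Icc a b) :
    ∃ L, Tendsto f (nhdsWithin x (Ioc x b)) (nhds L) := by
  rcases hx.2.eq_or_lt with rfl | hxb
  · exact ⟨0, by simp⟩
  have hlim : ∃ L, Tendsto f (nhdsWithin x (Ioi x)) (nhds L) := by
    rcases hx.1.eq_or_lt with rfl | hax
    exacts [hf.1, (hf.2.2 x ⟨hax, hxb⟩).2]
  exact hlim.imp fun L hL => hL.mono_left (nhdsWithin_mono x fun _ hy => hy.1)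

lemma exists_oscLE_left (hf : Regulated f a b) (hg : Regulated g a b) (hx : x ∈ Icc a b)
    (he : 0 < e) :
    ∃ d > 0, OscLE f (Metric.ball x d ∩ Ico a x) e ∧ OscLE g (Metric.ball x d ∩ Ico a x) e :=
  have ⟨_, hL⟩ := hf.exists_tendsto_left hx
  have ⟨_, hM⟩ := hg.exists_tendsto_left hx
  exists_oscLE_ball_inter₂ hL hM he

lemma exists_oscLE_right (hf : Regulated f a b) (hg : Regulated g a b) (hx : x ∈ Icc a b)
    (he : 0 < e) :
    ∃ d > 0, OscLE f (Metric.ball x d ∩ Ioc x b) e ∧ OscLE g (Metric.ball x d ∩ Ioc x b) e :=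
  have ⟨_, hL⟩ := hf.exists_tendsto_right hx
  have ⟨_, hM⟩ := hg.exists_tendsto_right hx
  exists_oscLE_ball_inter₂ hL hM he

lemma isBounded_image (hf : Regulated f a b) : Bornology.IsBounded (f '' Icc a b) := by
  refine isCompact_Icc.induction_on (p := fun s => Bornology.IsBounded (f '' s)) ?_ ?_ ?_ ?_
  · simp
  · exact fun s t hst ht => ht.subset (image_mono hst)
  · intro s t hs ht
    rw [image_union]
    exact hs.union ht
  · intro x hx
    obtain ⟨L, hL⟩ := hf.exists_tendsto_left hx
    obtain ⟨M, hM⟩ := hf.exists_tendsto_right hx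
    obtain ⟨s, hs, hfs⟩ := Metric.exists_isBounded_image_of_tendsto hL
    obtain ⟨t, ht, hft⟩ := Metric.exists_isBounded_image_of_tendsto hM
    refine ⟨insert x (s ∪ t), ?_, ?_⟩
    · rw [← Ico_union_Icc_eq_Icc hx.1 hx.2, ← Ioc_insert_left hx.2, nhdsWithin_union,
        nhdsWithin_insert]
      exact ⟨mem_of_superset hs (by grind), mem_pure.2 (by grind), mem_of_superset ht (by grind)⟩
    · rw [image_insert_eq, image_union]
      exact (hfs.union hft).insert (f x)

lemma exists_abs_le (hf : Regulated f a b) : ∃ K, ∀ x ∈ Icc a b, |f x| ≤ K := by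
  obtain ⟨K, hK⟩ := hf.isBounded_image.exists_norm_le
  exact ⟨K, fun x hx => hK (f x) (mem_image_of_mem f hx)⟩

lemma exists_oscLE (hf : Regulated f a b) : ∃ C, OscLE f (Icc a b) C := by
  obtain ⟨C, hC⟩ := Metric.isBounded_iff.1 hf.isBounded_image
  exact ⟨C, fun x hx y hy => hC (mem_image_of_mem f hx) (mem_image_of_mem f hy)⟩

lemma abs_sub_le_sSup (hf : Regulated f a b) {c : ℝ} (hc : c ∈ Icc a b) (hx : x ∈ Icc a b) :
    |f x - f c| ≤ sSup {y | ∃ t ∈ Icc a b, y = |f t - f c|} := by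
  obtain ⟨C, hC⟩ := hf.exists_oscLE
  refine le_csSup ⟨C, ?_⟩ ⟨x, hx, rfl⟩
  rintro _ ⟨t, ht, rfl⟩
  exact hC t ht c hc

end Regulated

lemma retagLE_of_oscLE {f g : ℝ → ℝ} {a b δ x c d : ℝ}
    (hf : OscLE f (Metric.ball x δ ∩ Icc a b) c) (hg : OscLE g (Metric.ball x δ ∩ Icc a b) d) :
    RetagLE f g a b δ x (c * d) := by
  intro p hp q hq ξ hξ hδ
  have hpq : p ≤ q := hp.2.trans hq.1
  have hmem : Icc p q ⊆ Metric.ball x δ ∩ Icc a b := fun y hy =>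
    ⟨by rw [Real.ball_eq_Ioo]; constructor <;> linarith [hy.1, hy.2, hp.2, hq.1],
      hp.1.trans hy.1, hy.2.trans hq.2⟩
  have hξx := hf ξ (hmem hξ) x (hmem ⟨hp.2, hq.1⟩)
  have hqp := hg q (hmem (right_mem_Icc.2 hpq)) p (hmem (left_mem_Icc.2 hpq))
  rw [abs_mul]
  exact mul_le_mul hξx hqp (abs_nonneg _) ((abs_nonneg _).trans hξx)

lemma NoCommonDiscont.exists_retagLE {f g : ℝ → ℝ} {a b x e : ℝ} (hfg : NoCommonDiscont f g a b)
    (hf : Regulated f a b) (hg : Regulated g a b) (hx : x ∈ Icc a b) (he : 0 < e) :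
    ∃ δ > 0, RetagLE f g a b δ x e := by
  rcases hfg x hx with hcont | hcont
  · obtain ⟨D, hD⟩ := hg.exists_oscLE
    obtain ⟨c, hc, hle⟩ := exists_pos_mul_lt he D
    obtain ⟨δ, hδ, hosc⟩ := exists_oscLE_ball_inter hcont hc
    rw [mul_comm] at hle
    exact ⟨δ, hδ, (retagLE_of_oscLE hosc (hD.mono inter_subset_right)).mono_right hle.le⟩
  · obtain ⟨C, hC⟩ := hf.exists_oscLE
    obtain ⟨d, hd, hle⟩ := exists_pos_mul_lt he C
    obtain ⟨δ, hδ, hosc⟩ := exists_oscLE_ball_inter hcont hd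
    exact ⟨δ, hδ, (retagLE_of_oscLE (hC.mono inter_subset_right) hosc).mono_right hle.le⟩


lemma NoCommonDiscont.exists_retagLE_Icc {f g : ℝ → ℝ} {a b u v x : ℝ}
    (hfg : NoCommonDiscont f g a b) (hf : Regulated f a b) (hg : Regulated g a b)
    (hx : x ∈ Icc a b) (hau : a ≤ u) (hvb : v ≤ b) :
    ∀ e > 0, ∃ δ > 0, RetagLE f g u v δ x e := fun _ he =>
  have ⟨δ, hδ, h⟩ := hfg.exists_retagLE hf hg hx he
  ⟨δ, hδ, h.mono hau hvb le_rfl⟩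

lemma NoCommonDiscont.exists_oscLE_retagLE_right {f g : ℝ → ℝ} {a b x e : ℝ}
    (hfg : NoCommonDiscont f g a b) (hf : Regulated f a b) (hg : Regulated g a b)
    (hx : x ∈ Icc a b) (he : 0 < e) :
    ∃ δ > 0, OscLE f (Metric.ball x δ ∩ Ioc x b) e ∧ OscLE g (Metric.ball x δ ∩ Ioc x b) e ∧
      RetagLE f g a b δ x e := by
  obtain ⟨d, hd, hfd, hgd⟩ := hf.exists_oscLE_right hg hx he
  obtain ⟨δ, hδ, hretag⟩ := hfg.exists_retagLE hf hg hx he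
  have hball := inter_subset_inter_left (Ioc x b)
    (Metric.ball_subset_ball (x := x) (min_le_left d δ))
  exact ⟨min d δ, lt_min hd hδ, hfd.mono hball, hgd.mono hball,
    hretag.mono le_rfl le_rfl (min_le_right d δ)⟩

lemma NoCommonDiscont.exists_oscLE_retagLE_left {f g : ℝ → ℝ} {a b x e : ℝ}
    (hfg : NoCommonDiscont f g a b) (hf : Regulated f a b) (hg : Regulated g a b)
    (hx : x ∈ Icc a b) (he : 0 < e) :
    ∃ δ > 0, OscLE g (Metric.ball x δ ∩ Ico a x) e ∧ RetagLE f g a b δ x e := by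
  obtain ⟨d, hd, -, hgd⟩ := hf.exists_oscLE_left hg hx he
  obtain ⟨δ, hδ, hretag⟩ := hfg.exists_retagLE hf hg hx he
  exact ⟨min d δ, lt_min hd hδ, hgd.mono (inter_subset_inter_left (Ico a x)
    (Metric.ball_subset_ball (min_le_left d δ))), hretag.mono le_rfl le_rfl (min_le_right d δ)⟩

/-- Every Riemann–Stieltjes sum of `∫ f dg` over `[u;v]` of small mesh lies, up to an arbitrarily
small error, in one interval of radius `c`. The centre may depend on the error. -/
def RiemannSumsNear (f g : ℝ → ℝ) (u v c : ℝ) : Prop :=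
  ∀ κ > 0, ∃ J, ∀ᶠ R in riemannSums f g u v, |R - J| ≤ c + κ

namespace RiemannSumsNear

variable {f g : ℝ → ℝ} {u v w c c' : ℝ}

lemma self (hc : 0 ≤ c) : RiemannSumsNear f g u u c := by
  refine fun κ hκ => ⟨0, eventually_riemannSums.2 ⟨1, one_pos, fun R hR => ?_⟩⟩
  rw [hR.eq_zero, sub_zero, abs_zero]
  positivity

lemma mono (h : RiemannSumsNear f g u v c) (hc : c ≤ c') : RiemannSumsNear f g u v c' :=
  fun κ hκ => (h κ hκ).imp fun _ hJ => hJ.mono fun _ hR => hR.trans (by gcongr)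

lemma concat (huv : u ≤ v) (hvw : v ≤ w) (hretag : ∀ e > 0, ∃ δ > 0, RetagLE f g u w δ v e)
    (h : RiemannSumsNear f g u v c) (h' : RiemannSumsNear f g v w c') :
    RiemannSumsNear f g u w (c + c') := by
  intro κ hκ
  obtain ⟨δ₀, hδ₀, hretag⟩ := hretag (κ / 3) (by positivity)
  obtain ⟨J₁, hJ₁⟩ := h (κ / 3) (by positivity)
  obtain ⟨J₂, hJ₂⟩ := h' (κ / 3) (by positivity)
  obtain ⟨δ₁, hδ₁, hJ₁⟩ := eventually_riemannSums.1 hJ₁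
  obtain ⟨δ₂, hδ₂, hJ₂⟩ := eventually_riemannSums.1 hJ₂
  refine ⟨J₁ + J₂, eventually_riemannSums.2
    ⟨min δ₀ (min δ₁ δ₂), lt_min hδ₀ (lt_min hδ₁ hδ₂), fun R hR => ?_⟩⟩
  obtain ⟨R₁, R₂, hR₁, hR₂, hsplit⟩ := hR.exists_split huv hvw (by positivity)
    (hretag.mono le_rfl le_rfl (min_le_left _ _))
  have h₁ := hJ₁ R₁ (hR₁.mono ((min_le_right _ _).trans (min_le_left _ _)))
  have h₂ := hJ₂ R₂ (hR₂.mono ((min_le_right _ _).trans (min_le_right _ _)))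
  calc |R - (J₁ + J₂)| = |(R - (R₁ + R₂)) + (R₁ - J₁) + (R₂ - J₂)| := by ring_nf
    _ ≤ |R - (R₁ + R₂)| + |R₁ - J₁| + |R₂ - J₂| := abs_add_three _ _ _
    _ ≤ c + c' + κ := by linarith

end RiemannSumsNear

/-- A superadditive function `φ` of subintervals of `[a;b]` that controls the error of one-cell
Riemann–Stieltjes sums on the intervals where `f` and `g` oscillate by at most `e`. -/
structure IsSewingControl (f g : ℝ → ℝ) (a b e : ℝ) (φ : ℝ → ℝ → ℝ) : Prop where
  nonneg : ∀ {u v}, a ≤ u → u ≤ v → v ≤ b → 0 ≤ φ u v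
  add_le : ∀ {u v w}, a ≤ u → u ≤ v → v ≤ w → w ≤ b → φ u v + φ v w ≤ φ u w
  abs_sub_le : ∀ {u v δ R}, a ≤ u → v ≤ b → OscLE f (Icc u v) e → OscLE g (Icc u v) e →
    IsRiemannSum f g δ u v R → |R - f u * (g v - g u)| ≤ φ u v

lemma abs_head_sub_le {K D κ c e R' fξ fx fq fp gx gq gp gv : ℝ}
    (hrest : |R' - fq * (gv - gq)| ≤ c) (hcell : |(fξ - fx) * (gq - gx)| ≤ e) (hfx : |fx| ≤ K)
    (hfp : |fp| ≤ K) (hf : |fq - fp| ≤ κ) (hg : |gq - gp| ≤ κ) (hgv : |gv - gq| ≤ D) :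
    |fξ * (gq - gx) + R' - (fx * (gp - gx) + fp * (gv - gp))| ≤ c + e + (2 * K + D) * κ := by
  have hκ : 0 ≤ κ := (abs_nonneg _).trans hf
  have hK : 0 ≤ K := (abs_nonneg _).trans hfx
  have hfx' : |fx * (gq - gp)| ≤ K * κ := (abs_mul _ _).trans_le (by gcongr)
  have hfp' : |fp * (gq - gp)| ≤ K * κ := (abs_mul _ _).trans_le (by gcongr)
  have hfg' : |(fq - fp) * (gv - gq)| ≤ κ * D := (abs_mul _ _).trans_le (by gcongr)
  rw [abs_le] at *
  constructor <;> linarith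


lemma abs_last_sub_le {K κ c e R' fξ fu fx gu gp gq gx : ℝ}
    (hrest : |R' - fu * (gq - gu)| ≤ c) (hcell : |(fξ - fx) * (gx - gq)| ≤ e) (hfu : |fu| ≤ K)
    (hfx : |fx| ≤ K) (hg : |gq - gp| ≤ κ) :
    |R' + fξ * (gx - gq) - (fu * (gp - gu) + fx * (gx - gp))| ≤ c + e + 2 * K * κ := by
  have hK : 0 ≤ K := (abs_nonneg _).trans hfu
  have hfu' : |fu * (gq - gp)| ≤ K * κ := (abs_mul _ _).trans_le (by gcongr)
  have hfx' : |fx * (gq - gp)| ≤ K * κ := (abs_mul _ _).trans_le (by gcongr)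
  rw [abs_le] at *
  constructor <;> linarith

lemma Icc_induction_of_local {P : ℝ → ℝ → Prop} {a b : ℝ} (hab : a ≤ b)
    (trans : ∀ {u v w}, a ≤ u → u ≤ v → v ≤ w → w ≤ b → P u v → P v w → P u w)
    (exists_ball : ∀ x ∈ Icc a b, ∃ d > 0, ∀ {u v}, u ∈ Metric.ball x d ∩ Icc a b →
      v ∈ Metric.ball x d ∩ Icc a b → u ≤ v → P u v) :
    P a b := by
  choose! d hd hP using exists_ball
  obtain ⟨t, ht₀, ht, ⟨N, htN⟩, hcover⟩ := exists_monotone_Icc_subset_open_cover_Icc hab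
    (c := fun x : Icc a b => {y | (y : ℝ) ∈ Metric.ball (x : ℝ) (d x)})
    (fun x => Metric.isOpen_ball.preimage continuous_subtype_val)
    fun x _ => mem_iUnion.2 ⟨x, Metric.mem_ball_self (hd x x.2)⟩
  have hstep (n : ℕ) : P (t n) (t (n + 1)) := by
    obtain ⟨x, hx⟩ := hcover n
    have hle : t n ≤ t (n + 1) := ht n.le_succ
    exact hP x x.2 ⟨hx (left_mem_Icc.2 hle), (t n).2⟩ ⟨hx (right_mem_Icc.2 hle), (t (n + 1)).2⟩ hle
  have hchain (n : ℕ) : P a (t (n + 1)) := by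
    induction n with
    | zero => simpa [ht₀] using hstep 0
    | succ n ih =>
      exact trans le_rfl (t (n + 1)).2.1 (ht (n + 1).le_succ) (t (n + 2)).2.2 ih (hstep (n + 1))
  simpa [htN (N + 1) N.le_succ] using hchain N

namespace IsSewingControl

variable {f g : ℝ → ℝ} {a b e u v x : ℝ} {φ : ℝ → ℝ → ℝ}

lemma riemannSumsNear_of_oscLE (hφ : IsSewingControl f g a b e φ) (hau : a ≤ u) (hvb : v ≤ b)
    (hf : OscLE f (Icc u v) e) (hg : OscLE g (Icc u v) e) : RiemannSumsNear f g u v (φ u v) :=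
  fun _ hκ => ⟨f u * (g v - g u), eventually_riemannSums.2 ⟨1, one_pos, fun _ hR =>
    (hφ.abs_sub_le hau hvb hf hg hR).trans (le_add_of_nonneg_right hκ.le)⟩⟩

-- A possible jump at `x` is harmless: the cell that touches `x` may be tagged at `x`, and its other
-- endpoint `q` may be replaced with a fixed `p` close to `x`.
lemma riemannSumsNear_of_oscLE_Ioc (hφ : IsSewingControl f g a b e φ) (hf : Regulated f a b)
    (hg : Regulated g a b) (hfg : NoCommonDiscont f g a b) (hax : a ≤ x) (hxv : x < v)
    (hvb : v ≤ b) (hfe : OscLE f (Ioc x v) e) (hge : OscLE g (Ioc x v) e) :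
    RiemannSumsNear f g x v (φ x v) := by
  intro κ hκ
  have hx : x ∈ Icc a b := ⟨hax, hxv.le.trans hvb⟩
  obtain ⟨K, hK⟩ := hf.exists_abs_le
  obtain ⟨D, hD⟩ := hg.exists_oscLE
  obtain ⟨κ', hκ', hle⟩ := exists_pos_mul_lt hκ (2 * K + D + 1)
  obtain ⟨δ, hδ, hfδ, hgδ, hretag⟩ := hfg.exists_oscLE_retagLE_right hf hg hx hκ'
  have hnear {q : ℝ} (hxq : x < q) (hqv : q ≤ v) (hqδ : q - x < δ) :
      q ∈ Metric.ball x δ ∩ Ioc x b :=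
    ⟨by rw [Real.ball_eq_Ioo]; constructor <;> linarith, hxq, hqv.trans hvb⟩
  obtain ⟨p, hxp, hp⟩ := exists_between (lt_min hxv (lt_add_of_pos_right x hδ))
  have hp := hnear hxp (hp.le.trans (min_le_left _ _))
    (sub_lt_iff_lt_add'.2 (hp.trans_le (min_le_right _ _)))
  refine ⟨f x * (g p - g x) + f p * (g v - g p), eventually_riemannSums.2 ⟨δ, hδ, fun R hR => ?_⟩⟩
  obtain ⟨q, ξ, R', hxq, hqv, hξ, hqδ, hR', rfl⟩ := hR.exists_head hxv
  have hq := hnear hxq hqv hqδ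
  have hosc : Icc q v ⊆ Ioc x v := fun y hy => ⟨hxq.trans_le hy.1, hy.2⟩
  have hrest := hφ.abs_sub_le (hax.trans hxq.le) hvb (hfe.mono hosc) (hge.mono hosc) hR'
  have hcell := hretag x ⟨hax, le_rfl⟩ q ⟨hxq.le, hq.2.2⟩ ξ hξ hqδ
  refine (abs_head_sub_le hrest hcell (hK x hx) (hK p ⟨hax.trans hxp.le, hp.2.2⟩)
    (hfδ q hq p hp) (hgδ q hq p hp)
    (hD v ⟨hax.trans hxv.le, hvb⟩ q ⟨hax.trans hxq.le, hq.2.2⟩)).trans ?_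
  linarith [hφ.add_le hax hxq.le hqv hvb, hφ.nonneg hax hxq.le hq.2.2]

lemma riemannSumsNear_of_oscLE_Ico (hφ : IsSewingControl f g a b e φ) (hf : Regulated f a b)
    (hg : Regulated g a b) (hfg : NoCommonDiscont f g a b) (hau : a ≤ u) (hux : u < x)
    (hxb : x ≤ b) (hfe : OscLE f (Ico u x) e) (hge : OscLE g (Ico u x) e) :
    RiemannSumsNear f g u x (φ u x) := by
  intro κ hκ
  have hx : x ∈ Icc a b := ⟨hau.trans hux.le, hxb⟩
  obtain ⟨K, hK⟩ := hf.exists_abs_le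
  obtain ⟨κ', hκ', hle⟩ := exists_pos_mul_lt hκ (2 * K + 1)
  obtain ⟨δ, hδ, hgδ, hretag⟩ := hfg.exists_oscLE_retagLE_left hf hg hx hκ'
  have hnear {q : ℝ} (huq : u ≤ q) (hqx : q < x) (hqδ : x - q < δ) :
      q ∈ Metric.ball x δ ∩ Ico a x :=
    ⟨by rw [Real.ball_eq_Ioo]; constructor <;> linarith, hau.trans huq, hqx⟩
  obtain ⟨p, hp, hpx⟩ := exists_between (max_lt hux (sub_lt_self x hδ))
  have hp := hnear ((le_max_left _ _).trans hp.le) hpx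
    (sub_lt_comm.1 ((le_max_right _ _).trans_lt hp))
  refine ⟨f u * (g p - g u) + f x * (g x - g p), eventually_riemannSums.2 ⟨δ, hδ, fun R hR => ?_⟩⟩
  obtain ⟨q, ξ, R', huq, hqx, hξ, hqδ, hR', rfl⟩ := hR.exists_last hux
  have hq := hnear huq hqx hqδ
  have hosc : Icc u q ⊆ Ico u x := fun y hy => ⟨hy.1, hy.2.trans_lt hqx⟩
  have hrest := hφ.abs_sub_le hau (hqx.le.trans hxb) (hfe.mono hosc) (hge.mono hosc) hR'
  have hcell := hretag q ⟨hq.2.1, hqx.le⟩ x ⟨le_rfl, hxb⟩ ξ hξ hqδ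
  refine (abs_last_sub_le hrest hcell (hK u ⟨hau, hux.le.trans hxb⟩) (hK x hx)
    (hgδ q hq p hp)).trans ?_
  linarith [hφ.add_le hau huq hqx.le hxb, hφ.nonneg hq.2.1 hqx.le hxb]

lemma exists_ball_riemannSumsNear (hφ : IsSewingControl f g a b e φ) (he : 0 < e)
    (hf : Regulated f a b) (hg : Regulated g a b) (hfg : NoCommonDiscont f g a b)
    (hx : x ∈ Icc a b) :
    ∃ d > 0, ∀ {u v}, u ∈ Metric.ball x d ∩ Icc a b → v ∈ Metric.ball x d ∩ Icc a b → u ≤ v →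
      RiemannSumsNear f g u v (φ u v) := by
  obtain ⟨d₁, hd₁, hf₁, hg₁⟩ := hf.exists_oscLE_left hg hx he
  obtain ⟨d₂, hd₂, hf₂, hg₂⟩ := hf.exists_oscLE_right hg hx he
  refine ⟨min d₁ d₂, lt_min hd₁ hd₂, fun {u v} hu hv huv => ?_⟩
  have hball : Icc u v ⊆ Metric.ball x (min d₁ d₂) := by
    rw [Real.ball_eq_Ioo] at hu hv ⊢
    exact Icc_subset_Ioo hu.1.1 hv.1.2
  have hleft {s : Set ℝ} (hs : s ⊆ Icc u v) (hsx : ∀ y ∈ s, y < x) :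
      s ⊆ Metric.ball x d₁ ∩ Ico a x := fun y hy =>
    ⟨Metric.ball_subset_ball (min_le_left _ _) (hball (hs hy)), hu.2.1.trans (hs hy).1, hsx y hy⟩
  have hright {s : Set ℝ} (hs : s ⊆ Icc u v) (hxs : ∀ y ∈ s, x < y) :
      s ⊆ Metric.ball x d₂ ∩ Ioc x b := fun y hy =>
    ⟨Metric.ball_subset_ball (min_le_right _ _) (hball (hs hy)), hxs y hy, (hs hy).2.trans hv.2.2⟩
  rcases lt_or_ge v x with hvx | hxv
  · have hs := hleft subset_rfl fun y hy => hy.2.trans_lt hvx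
    exact hφ.riemannSumsNear_of_oscLE hu.2.1 hv.2.2 (hf₁.mono hs) (hg₁.mono hs)
  rcases lt_or_ge x u with hxu | hux
  · have hs := hright subset_rfl fun y hy => hxu.trans_le hy.1
    exact hφ.riemannSumsNear_of_oscLE hu.2.1 hv.2.2 (hf₂.mono hs) (hg₂.mono hs)
  have hux' : RiemannSumsNear f g u x (φ u x) := by
    rcases hux.eq_or_lt with rfl | hlt
    · exact .self (hφ.nonneg hu.2.1 le_rfl hu.2.2)
    · have hs := hleft (Ico_subset_Icc_self.trans (Icc_subset_Icc_right hxv)) fun y hy => hy.2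
      exact hφ.riemannSumsNear_of_oscLE_Ico hf hg hfg hu.2.1 hlt hx.2 (hf₁.mono hs) (hg₁.mono hs)
  have hxv' : RiemannSumsNear f g x v (φ x v) := by
    rcases hxv.eq_or_lt with rfl | hlt
    · exact .self (hφ.nonneg hx.1 le_rfl hx.2)
    · have hs := hright (Ioc_subset_Icc_self.trans (Icc_subset_Icc_left hux)) fun y hy => hy.1
      exact hφ.riemannSumsNear_of_oscLE_Ioc hf hg hfg hx.1 hlt hv.2.2 (hf₂.mono hs) (hg₂.mono hs)
  exact (hux'.concat hux hxv (hfg.exists_retagLE_Icc hf hg hx hu.2.1 hv.2.2) hxv').mono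
    (hφ.add_le hu.2.1 hux hxv hv.2.2)

theorem riemannSumsNear (hφ : IsSewingControl f g a b e φ) (he : 0 < e) (hab : a ≤ b)
    (hf : Regulated f a b) (hg : Regulated g a b) (hfg : NoCommonDiscont f g a b) :
    RiemannSumsNear f g a b (φ a b) :=
  Icc_induction_of_local (P := fun u v => RiemannSumsNear f g u v (φ u v)) hab
    (fun hau huv hvw hwb h h' => (h.concat huv hvw
      (hfg.exists_retagLE_Icc hf hg ⟨hau.trans huv, hvw.trans hwb⟩ hau hwb) h').mono
        (hφ.add_le hau huv hvw hwb))
    fun _ hx => hφ.exists_ball_riemannSumsNear he hf hg hfg hx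

end IsSewingControl

theorem exists_riemannSums_le_nhds_of_isSewingControl {f g : ℝ → ℝ} {a b : ℝ} (hab : a ≤ b)
    (hf : Regulated f a b) (hg : Regulated g a b) (hfg : NoCommonDiscont f g a b)
    (hφ : ∀ ε > 0, ∃ e > 0, ∃ φ, IsSewingControl f g a b e φ ∧ φ a b ≤ ε) :
    ∃ I, riemannSums f g a b ≤ nhds I := by
  refine CompleteSpace.complete (Metric.cauchy_iff.2 ⟨riemannSums_neBot f g hab, fun ε hε => ?_⟩)
  obtain ⟨e, he, φ, hφ, hle⟩ := hφ (ε / 8) (by positivity)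
  obtain ⟨J, hJ⟩ := hφ.riemannSumsNear he hab hf hg hfg (ε / 8) (by positivity)
  refine ⟨_, hJ, fun R (hR : |R - J| ≤ _) R' (hR' : |R' - J| ≤ _) => ?_⟩
  rw [← Real.dist_eq] at hR hR'
  linarith [dist_triangle_right R R' J]

lemma IsSewingControl.of_enorm_le {f g : ℝ → ℝ} {a b e : ℝ} {ω : ℝ → ℝ → ENNReal}
    (hadd : ∀ {u v w}, u ≤ v → v ≤ w → ω u v + ω v w ≤ ω u w) (hfin : ω a b ≠ ⊤)
    (hle : ∀ {u v δ R}, OscLE f (Icc u v) e → OscLE g (Icc u v) e → IsRiemannSum f g δ u v R →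
      ‖R - f u * (g v - g u)‖ₑ ≤ ω u v) :
    IsSewingControl f g a b e fun u v => (ω u v).toReal := by
  have hfin {u v : ℝ} (hau : a ≤ u) (huv : u ≤ v) (hvb : v ≤ b) : ω u v ≠ ⊤ :=
    ne_top_of_le_ne_top hfin <| calc
      ω u v ≤ ω a v := le_add_self.trans (hadd hau huv)
      _ ≤ ω a b := le_self_add.trans (hadd (hau.trans huv) hvb)
  refine ⟨fun _ _ _ => ENNReal.toReal_nonneg, fun hau huv hvw hwb => ?_, fun hau hvb hf hg hR => ?_⟩
  · rw [← ENNReal.toReal_add (hfin hau huv (hvw.trans hwb)) (hfin (hau.trans huv) hvw hwb)]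
    exact ENNReal.toReal_mono (hfin hau (huv.trans hvw) hwb) (hadd huv hvw)
  · rw [← Real.norm_eq_abs, ← toReal_enorm]
    exact ENNReal.toReal_mono (hfin hau hR.le hvb) (hle hf hg hR)

lemma isSewingControl_scaleSum_left {f g : ℝ → ℝ} {α β : ℕ → ℝ} {a b : ℝ} (hα : IsScale α)
    (hβ : IsScale β) (hfin : scaleSum f g α β a b ≠ ⊤) :
    IsSewingControl f g a b (α 0) fun u v => (scaleSum f g α β u v).toReal :=
  .of_enorm_le (scaleSum_add_le f g α β) hfin fun hf _ hR =>
    hR.enorm_sub_le_of_left hα hβ fun x hx => hf x hx _ (left_mem_Icc.2 hR.le)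

lemma isSewingControl_scaleSum_right {f g : ℝ → ℝ} {α β : ℕ → ℝ} {a b : ℝ} (hα : IsScale α)
    (hβ : IsScale β) (hfin : scaleSum g f β α a b ≠ ⊤) :
    IsSewingControl f g a b (β 0) fun u v => (scaleSum g f β α u v).toReal :=
  .of_enorm_le (scaleSum_add_le g f β α) hfin fun _ hg hR =>
    hR.enorm_sub_le_of_right hα hβ fun x hx => hg x hx _ (right_mem_Icc.2 hR.le)

/-- The multiscale sum of `f` and `g` can be made arbitrarily small by a choice of scales whose
leading entry, which bounds an oscillation of `f`, is positive. -/
def HasSmallScaleSum (f g : ℝ → ℝ) (a b : ℝ) : Prop :=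
  ∀ ε > 0, ∃ α β, IsScale α ∧ IsScale β ∧ 0 < α 0 ∧ scaleSum f g α β a b ≤ ENNReal.ofReal ε

theorem exists_riemannSums_le_nhds {f g : ℝ → ℝ} {a b : ℝ}
    (h : HasSmallScaleSum f g a b ∨ HasSmallScaleSum g f a b) (hab : a ≤ b) (hf : Regulated f a b)
    (hg : Regulated g a b) (hfg : NoCommonDiscont f g a b) :
    ∃ I, riemannSums f g a b ≤ nhds I := by
  refine exists_riemannSums_le_nhds_of_isSewingControl hab hf hg hfg fun ε hε => ?_
  rcases h with h | h <;> obtain ⟨α, β, hα, hβ, hα₀, hle⟩ := h ε hε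
  · exact ⟨_, hα₀, _, isSewingControl_scaleSum_left hα hβ (ne_top_of_le_ne_top (by simp) hle),
      ENNReal.toReal_le_of_le_ofReal hε.le hle⟩
  · exact ⟨_, hα₀, _, isSewingControl_scaleSum_right hβ hα (ne_top_of_le_ne_top (by simp) hle),
      ENNReal.toReal_le_of_le_ofReal hε.le hle⟩

lemma IsScale.zero : IsScale 0 :=
  ⟨fun _ => le_rfl, antitone_const, tendsto_const_nhds⟩

lemma IsScale.single {e : ℝ} (he : 0 ≤ e) : IsScale (Pi.single 0 e) where
  nonneg k := by cases k <;> simp [he]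
  antitone_succ := by simpa using antitone_const
  tendsto_zero := (tendsto_add_atTop_iff_nat 1).1 (by simp)

lemma IsScale.add_right {α : ℕ → ℝ} (hα : IsScale α) (K : ℕ) : IsScale fun k => α (k + K) where
  nonneg _ := hα.nonneg _
  antitone_succ k l hkl := by
    simpa only [add_right_comm _ 1 K] using hα.antitone_succ (Nat.add_le_add_right hkl K)
  tendsto_zero := (tendsto_add_atTop_iff_nat K).2 hα.tendsto_zero

lemma hasSmallScaleSum_of_truncVar_ne_top (f : ℝ → ℝ) {g : ℝ → ℝ} {a b : ℝ}
    (h : truncVar g 0 a b ≠ ⊤) : HasSmallScaleSum f g a b := by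
  intro ε hε
  obtain ⟨e, he, hle⟩ := exists_pos_mul_lt hε (truncVar g 0 a b).toReal
  refine ⟨Pi.single 0 e, 0, .single he.le, .zero, by simpa using he, ?_⟩
  have hsum : scaleSum f g (Pi.single 0 e) 0 a b = ENNReal.ofReal e * truncVar g 0 a b := by
    rw [scaleSum, tsum_eq_single 0 fun k hk => by simp [hk]]
    simp
  rw [hsum, ← ENNReal.ofReal_toReal h, ← ENNReal.ofReal_mul he.le, mul_comm]
  exact ENNReal.ofReal_le_ofReal hle.le

lemma tendsto_scaleSum_add_right {f g : ℝ → ℝ} {α β : ℕ → ℝ} {a b : ℝ} (hα : IsScale α)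
    (hβ : IsScale β) (hfin : scaleSum f g α β a b ≠ ⊤) :
    Tendsto (fun K => scaleSum f g (fun k => α (k + K)) (fun k => β (k + K)) a b) atTop
      (nhds 0) := by
  rw [scaleSum, ENNReal.add_ne_top] at hfin
  have htail := (ENNReal.tendsto_sum_nat_add _ hfin.1).add (ENNReal.tendsto_sum_nat_add _ hfin.2)
  rw [add_zero] at htail
  refine tendsto_of_tendsto_of_tendsto_of_le_of_le tendsto_const_nhds htail (fun _ => zero_le)
    fun K => ?_
  simp only [scaleSum, add_right_comm _ 1 K]
  gcongr with k k
  exacts [hα.nonneg _, one_le_two, k.le_add_right K, hβ.nonneg _, one_le_two, k.le_add_right K]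

lemma hasSmallScaleSum_of_forall_pos {f g : ℝ → ℝ} {α β : ℕ → ℝ} {a b : ℝ} (hα : IsScale α)
    (hβ : IsScale β) (hpos : ∀ k, 0 < α k) (hfin : scaleSum f g α β a b ≠ ⊤) :
    HasSmallScaleSum f g a b := by
  intro ε hε
  obtain ⟨K, hK⟩ := ((tendsto_scaleSum_add_right hα hβ hfin).eventually_le_const
    (ENNReal.ofReal_pos.2 hε)).exists
  exact ⟨_, _, hα.add_right K, hβ.add_right K, hpos _, hK⟩

-- At the first vanishing entry of `α` the sum controls an untruncated variation of `f` or `g`.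
theorem hasSmallScaleSum_of_scaleSum_ne_top {f g : ℝ → ℝ} {α β : ℕ → ℝ} {a b c : ℝ}
    (hα : IsScale α) (hβ : IsScale β) (hf : ∀ x ∈ Icc a b, |f x - c| ≤ α 0)
    (hfin : scaleSum f g α β a b ≠ ⊤) :
    HasSmallScaleSum f g a b ∨ HasSmallScaleSum g f a b := by
  by_cases hpos : ∀ k, 0 < α k
  · exact .inl (hasSmallScaleSum_of_forall_pos hα hβ hpos hfin)
  push Not at hpos
  classical
  have hzero : α (Nat.find hpos) = 0 := (Nat.find_spec hpos).antisymm (hα.nonneg _)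
  rcases hk : Nat.find hpos with _ | k
  · rw [hk] at hzero
    have hconst : ∀ x ∈ Icc a b, f x = c := fun x hx =>
      sub_eq_zero.1 (abs_nonpos_iff.1 ((hf x hx).trans hzero.le))
    exact .inr (hasSmallScaleSum_of_truncVar_ne_top g
      (by simp [truncVar_zero_of_eqOn_const hconst]))
  have hαk : 0 < α k := not_le.1 (Nat.find_min hpos (hk ▸ k.lt_succ_self))
  rw [hk] at hzero
  rw [scaleSum, ENNReal.add_ne_top] at hfin
  have hgk := ENNReal.ne_top_of_tsum_ne_top hfin.1 k
  have hfk := ENNReal.ne_top_of_tsum_ne_top hfin.2 k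
  rw [hzero] at hfk
  rcases (hβ.nonneg (k + 1)).eq_or_lt with hβk | hβk
  · rw [← hβk] at hgk
    refine .inl (hasSmallScaleSum_of_truncVar_ne_top f fun htop => hgk ?_)
    rw [htop, ENNReal.mul_top (ENNReal.ofReal_pos.2 (by positivity)).ne']
  · refine .inr (hasSmallScaleSum_of_truncVar_ne_top g fun htop => hfk ?_)
    rw [htop, ENNReal.mul_top (ENNReal.ofReal_pos.2 (by positivity)).ne']

lemma IsScale.cons {c : ℝ} {η : ℕ → ℝ} (hc : 0 ≤ c) (hη : ∀ k, 0 ≤ η k) (hanti : Antitone η)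
    (hlim : Tendsto η atTop (nhds 0)) : IsScale fun k => if k = 0 then c else η (k - 1) where
  nonneg k := by
    split_ifs
    exacts [hc, hη _]
  antitone_succ := hanti
  tendsto_zero := (tendsto_add_atTop_iff_nat 1).1 hlim

lemma enorm_sub_le_of_forall_isRiemannSum {f g : ℝ → ℝ} {a b ξ I c : ℝ} {M : ENNReal} (hab : a < b)
    (hξ : ξ ∈ Icc a b) (hI : riemannSums f g a b ≤ nhds I)
    (hM : ∀ δ R, IsRiemannSum f g δ a b R → ‖R - c‖ₑ ≤ M) :
    ‖I - f ξ * (g b - g a)‖ₑ ≤ 2 * M := by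
  have := riemannSums_neBot f g hab.le
  have hev : ∀ᶠ R in riemannSums f g a b, edist R c ≤ M :=
    eventually_riemannSums.2 ⟨1, one_pos, fun R hR => (edist_eq_enorm_sub R c).trans_le (hM 1 R hR)⟩
  have hlim : edist I c ≤ M := le_of_tendsto ((tendsto_id'.2 hI).edist tendsto_const_nhds) hev
  have hcell : edist (f ξ * (g b - g a)) c ≤ M := by
    rw [edist_eq_enorm_sub, ← zero_add (f ξ * _)]
    exact hM _ _ (IsRiemannSum.nil.snoc ξ hab hξ (lt_add_one (b - a)))
  calc ‖I - f ξ * (g b - g a)‖ₑ = edist I (f ξ * (g b - g a)) := (edist_eq_enorm_sub _ _).symm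
    _ ≤ edist I c + edist (f ξ * (g b - g a)) c := edist_triangle_right _ _ _
    _ ≤ 2 * M := (add_le_add hlim hcell).trans_eq (two_mul M).symm

/-- Corollary 1: existence of the Riemann–Stieltjes integral and the estimate
`|∫_a^b f dg − f(ξ)(g(b) − g(a))| ≤ 2 min{S, S̃}`. -/
theorem rs_integral_estimate_min
    (a b : ℝ) (hab : a < b) (f g : ℝ → ℝ)
    (hf : Regulated f a b) (hg : Regulated g a b)
    (hfg : NoCommonDiscont f g a b)
    (ξ : ℝ) (hξ : ξ ∈ Set.Icc a b)
    (η θ : ℕ → ℝ) (hηnn : ∀ k, 0 ≤ η k) (hθnn : ∀ k, 0 ≤ θ k)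
    (hηa : Antitone η) (hθa : Antitone θ)
    (hηlim : Tendsto η atTop (nhds 0)) (hθlim : Tendsto θ atTop (nhds 0))
    (ηm1 θm1 : ℝ)
    (hηm1 : ηm1 = sSup {x | ∃ t ∈ Set.Icc a b, x = |f t - f a|})
    (hθm1 : θm1 = sSup {x | ∃ t ∈ Set.Icc a b, x = |g b - g t|})
    (S S' : ENNReal)
    (hS : S = (∑' k : ℕ,
          ENNReal.ofReal ((2 : ℝ) ^ k * (if k = 0 then ηm1 else η (k - 1))) *
            truncVar g (θ k) a b)
        + ∑' k : ℕ, ENNReal.ofReal ((2 : ℝ) ^ k * θ k) * truncVar f (η k) a b)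
    (hS' : S' = (∑' k : ℕ,
          ENNReal.ofReal ((2 : ℝ) ^ k * (if k = 0 then θm1 else θ (k - 1))) *
            truncVar f (η k) a b)
        + ∑' k : ℕ, ENNReal.ofReal ((2 : ℝ) ^ k * η k) * truncVar g (θ k) a b)
    (hfin : S < ⊤ ∨ S' < ⊤) :
    ∃ I : ℝ, RSIntegral f g a b I ∧
      ENNReal.ofReal |I - f ξ * (g b - g a)| ≤ 2 * min S S' := by
  have ha := left_mem_Icc.2 hab.le
  have hb := right_mem_Icc.2 hab.le
  have hfη : ∀ x ∈ Icc a b, |f x - f a| ≤ ηm1 := fun x hx => hηm1 ▸ hf.abs_sub_le_sSup ha hx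
  have hgθ : ∀ x ∈ Icc a b, |g x - g b| ≤ θm1 := fun x hx => by
    simpa only [hθm1, abs_sub_comm (g b)] using hg.abs_sub_le_sSup hb hx
  set α : ℕ → ℝ := fun k => if k = 0 then ηm1 else η (k - 1)
  set β : ℕ → ℝ := fun k => if k = 0 then θm1 else θ (k - 1)
  have hα : IsScale α := .cons ((abs_nonneg _).trans (hfη a ha)) hηnn hηa hηlim
  have hβ : IsScale β := .cons ((abs_nonneg _).trans (hgθ b hb)) hθnn hθa hθlim
  replace hS : S = scaleSum f g α β a b := hS
  replace hS' : S' = scaleSum g f β α a b := hS'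
  have hsmall : HasSmallScaleSum f g a b ∨ HasSmallScaleSum g f a b := by
    rcases hfin with h | h
    · exact hasSmallScaleSum_of_scaleSum_ne_top hα hβ hfη (hS ▸ h.ne)
    · exact (hasSmallScaleSum_of_scaleSum_ne_top hβ hα hgθ (hS' ▸ h.ne)).symm
  obtain ⟨I, hI⟩ := exists_riemannSums_le_nhds hsmall hab.le hf hg hfg
  refine ⟨I, rsIntegral_of_riemannSums_le_nhds hI, ?_⟩
  rw [← Real.enorm_eq_ofReal_abs]
  exact enorm_sub_le_of_forall_isRiemannSum (c := f a * (g b - g a)) hab hξ hI fun δ R hR =>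
    le_min (hS ▸ hR.enorm_sub_le_of_left hα hβ hfη) (hS' ▸ hR.enorm_sub_le_of_right hα hβ hgθ)
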